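/- arXiv:2311.12206 — 4 statements merged into one kernel-verified Lean document; each statement's English description precedes it below -/
import Mathlib

section
/- For every integrable real random variable X on a probability space and every β ∈ (0,1), the infimum defining CVaR_β[X] is attained at t = VaR_β[X]; that is, CVaR_β[X] = VaR_β[X] + (1-β)⁻¹ · E[(X - VaR_β[X])₊]. -/
open MeasureTheory

/-!
A `β`-quantile `v` of `X` satisfies `ℙ[X > v] ≤ 1 - β ≤ ℙ[X ≥ v]`. The slopes of the convex function
`t ↦ E[(X - t)₊]` at `v` from the right and from the left are `-ℙ[X > v]` and `-ℙ[X ≥ v]`, so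
`-(1 - β)` is a subgradient there and `v` minimizes `t ↦ t + (1 - β)⁻¹ E[(X - t)₊]`. By right
continuity of the distribution function, the value-at-risk is such a quantile.
-/

open Filter ProbabilityTheory Set Topology

section Monotone

variable {α γ : Type*} [ConditionallyCompleteLinearOrder α] [DenselyOrdered α]
  [TopologicalSpace α] [OrderTopology α] [TopologicalSpace γ]

theorem le_apply_csInf_setOf_le [NoMaxOrder α] [Preorder γ] [ClosedIciTopology γ]
    {f : α → γ} {c : γ} (hf : Monotone f) (hf_right : ∀ x, ContinuousWithinAt f (Ici x) x)
    (hne : {x | c ≤ f x}.Nonempty) : c ≤ f (sInf {x | c ≤ f x}) := by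
  have right_limit : Tendsto f (𝓝[>] sInf {x | c ≤ f x}) (𝓝 (f (sInf {x | c ≤ f x}))) :=
    (hf_right _).mono Ioi_subset_Ici_self
  refine ge_of_tendsto right_limit ?_
  filter_upwards [self_mem_nhdsWithin] with y hy
  obtain ⟨x, hx, hxy⟩ := exists_lt_of_csInf_lt hne hy
  exact hx.trans (hf hxy.le)

theorem leftLim_csInf_setOf_le_le [NoMinOrder α] [ConditionallyCompleteLinearOrder γ]
    [OrderTopology γ] {f : α → γ} {c : γ} (hf : Monotone f)
    (hbdd : BddBelow {x | c ≤ f x}) : Function.leftLim f (sInf {x | c ≤ f x}) ≤ c := by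
  refine le_of_tendsto (hf.tendsto_leftLim _) ?_
  filter_upwards [self_mem_nhdsWithin] with y hy
  exact le_of_not_ge fun hcy => (csInf_le hbdd hcy).not_gt hy

end Monotone

theorem measureReal_Iio_eq_leftLim_cdf (ν : Measure ℝ) [IsProbabilityMeasure ν] (x : ℝ) :
    ν.real (Iio x) = Function.leftLim (cdf ν) x := by
  have leftLim_nonneg : 0 ≤ Function.leftLim (cdf ν) x :=
    (cdf_nonneg ν (x - 1)).trans ((monotone_cdf ν).le_leftLim (sub_one_lt x))
  have measure_Iio := (cdf ν).measure_Iio (tendsto_cdf_atBot ν) x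
  rw [measure_cdf, sub_zero] at measure_Iio
  rw [Measure.real, measure_Iio, ENNReal.toReal_ofReal leftLim_nonneg]

theorem nonempty_setOf_le_cdf (ν : Measure ℝ) {β : ℝ} (hβ : β < 1) :
    {t | β ≤ cdf ν t}.Nonempty :=
  ((tendsto_cdf_atTop ν).eventually_const_le hβ).exists

theorem bddBelow_setOf_le_cdf (ν : Measure ℝ) {β : ℝ} (hβ : 0 < β) :
    BddBelow {t | β ≤ cdf ν t} := by
  obtain ⟨m, hm⟩ := ((tendsto_cdf_atBot ν).eventually_lt_const hβ).exists
  exact ⟨m, fun _ ht => ((monotone_cdf ν).reflect_lt (hm.trans_le ht)).le⟩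

section Quantile

variable {Ω : Type*} [MeasurableSpace Ω] {μ : Measure Ω} {X : Ω → ℝ} {β v : ℝ}

/-- `v` is a `β`-quantile of `X` under `μ`. Quantiles need not be unique: the value-at-risk is the
smallest one, and each of them attains the infimum defining the conditional value-at-risk. -/
structure IsQuantile (μ : Measure Ω) (X : Ω → ℝ) (β v : ℝ) : Prop where
  measureReal_lt_le : μ.real {ω | X ω < v} ≤ β
  le_measureReal_le : β ≤ μ.real {ω | X ω ≤ v}

theorem isQuantile_csInf [IsProbabilityMeasure μ] (hX : AEMeasurable X μ)
    (hβ : β ∈ Ioo (0 : ℝ) 1) : IsQuantile μ X β (sInf {t | β ≤ μ.real {ω | X ω ≤ t}}) := by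
  have : IsProbabilityMeasure (μ.map X) := Measure.isProbabilityMeasure_map hX
  have cdf_map (t : ℝ) : μ.real {ω | X ω ≤ t} = cdf (μ.map X) t := by
    rw [cdf_eq_real, map_measureReal_apply_of_aemeasurable hX measurableSet_Iic]
    rfl
  have leftLim_cdf_map (t : ℝ) :
      μ.real {ω | X ω < t} = Function.leftLim (cdf (μ.map X)) t := by
    rw [← measureReal_Iio_eq_leftLim_cdf,
      map_measureReal_apply_of_aemeasurable hX measurableSet_Iio]
    rfl
  simp only [cdf_map]
  constructor
  · rw [leftLim_cdf_map]
    exact leftLim_csInf_setOf_le_le (monotone_cdf _) (bddBelow_setOf_le_cdf _ hβ.1)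
  · rw [cdf_map]
    exact le_apply_csInf_setOf_le (monotone_cdf _) (cdf _).right_continuous
      (nonempty_setOf_le_cdf _ hβ.2)

theorem integrable_max_sub_zero [IsFiniteMeasure μ] (hX : AEMeasurable X μ)
    (hX_pos : Integrable (fun ω => max (X ω) 0) μ) (t : ℝ) :
    Integrable (fun ω => max (X ω - t) 0) μ := by
  refine (hX_pos.add (integrable_const |t|)).mono' (by fun_prop) (ae_of_all _ fun ω => ?_)
  rw [Real.norm_of_nonneg (le_max_right _ _), Pi.add_apply]
  exact max_le (by linarith [le_max_left (X ω) 0, neg_le_abs t]) (by positivity)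

theorem sub_mul_measureReal_le_integral_sub_integral [IsFiniteMeasure μ] (hX : AEMeasurable X μ)
    (hX_pos : Integrable (fun ω => max (X ω) 0) μ) {s : Set Ω} (hs : NullMeasurableSet s μ)
    (hs_gt : {ω | v < X ω} ⊆ s) (hs_ge : s ⊆ {ω | v ≤ X ω}) (t : ℝ) :
    (v - t) * μ.real s ≤ ∫ ω, max (X ω - t) 0 ∂μ - ∫ ω, max (X ω - v) 0 ∂μ := by
  have integrable_t := integrable_max_sub_zero hX hX_pos t
  have integrable_v := integrable_max_sub_zero hX hX_pos v
  calc (v - t) * μ.real s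
      = ∫ ω, s.indicator (fun _ => v - t) ω ∂μ := by
        rw [integral_indicator₀ hs, setIntegral_const, smul_eq_mul, mul_comm]
    _ ≤ ∫ ω, (max (X ω - t) 0 - max (X ω - v) 0) ∂μ := by
        refine integral_mono ((integrable_const _).indicator₀ hs)
          (integrable_t.sub integrable_v) fun ω => ?_
        by_cases hω : ω ∈ s
        · have : v ≤ X ω := hs_ge hω
          rw [indicator_of_mem hω]
          grind
        · have : X ω ≤ v := not_lt.1 fun h => hω (hs_gt h)
          rw [indicator_of_notMem hω]
          grind
    _ = ∫ ω, max (X ω - t) 0 ∂μ - ∫ ω, max (X ω - v) 0 ∂μ :=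
        integral_sub integrable_t integrable_v

namespace IsQuantile

variable [IsProbabilityMeasure μ]

theorem measureReal_gt_le (hv : IsQuantile μ X β v) (hX : AEMeasurable X μ) :
    μ.real {ω | v < X ω} ≤ 1 - β := by
  have compl_eq : {ω | X ω ≤ v}ᶜ = {ω | v < X ω} := by ext; simp
  rw [← compl_eq, probReal_compl_eq_one_sub₀ (nullMeasurableSet_le hX aemeasurable_const)]
  linarith [hv.le_measureReal_le]

theorem le_measureReal_ge (hv : IsQuantile μ X β v) (hX : AEMeasurable X μ) :
    1 - β ≤ μ.real {ω | v ≤ X ω} := by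
  have compl_eq : {ω | X ω < v}ᶜ = {ω | v ≤ X ω} := by ext; simp
  rw [← compl_eq, probReal_compl_eq_one_sub₀ (nullMeasurableSet_lt hX aemeasurable_const)]
  linarith [hv.measureReal_lt_le]

theorem sub_mul_le_integral_sub_integral (hv : IsQuantile μ X β v) (hX : AEMeasurable X μ)
    (hX_pos : Integrable (fun ω => max (X ω) 0) μ) (t : ℝ) :
    (v - t) * (1 - β) ≤ ∫ ω, max (X ω - t) 0 ∂μ - ∫ ω, max (X ω - v) 0 ∂μ := by
  rcases le_total v t with hvt | htv
  · calc (v - t) * (1 - β)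
        ≤ (v - t) * μ.real {ω | v < X ω} :=
          mul_le_mul_of_nonpos_left (hv.measureReal_gt_le hX) (sub_nonpos.2 hvt)
      _ ≤ _ := sub_mul_measureReal_le_integral_sub_integral hX hX_pos
          (nullMeasurableSet_lt aemeasurable_const hX) Subset.rfl (fun _ => le_of_lt (α := ℝ)) t
  · calc (v - t) * (1 - β)
        ≤ (v - t) * μ.real {ω | v ≤ X ω} :=
          mul_le_mul_of_nonneg_left (hv.le_measureReal_ge hX) (sub_nonneg.2 htv)
      _ ≤ _ := sub_mul_measureReal_le_integral_sub_integral hX hX_pos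
          (nullMeasurableSet_le aemeasurable_const hX) (fun _ => le_of_lt (α := ℝ)) Subset.rfl t

theorem add_inv_mul_integral_le (hv : IsQuantile μ X β v) (hX : AEMeasurable X μ)
    (hX_pos : Integrable (fun ω => max (X ω) 0) μ) (hβ : β < 1) (t : ℝ) :
    v + (1 - β)⁻¹ * ∫ ω, max (X ω - v) 0 ∂μ ≤ t + (1 - β)⁻¹ * ∫ ω, max (X ω - t) 0 ∂μ := by
  have subgradient := hv.sub_mul_le_integral_sub_integral hX hX_pos t
  rw [← le_div_iff₀ (sub_pos.2 hβ), div_eq_inv_mul, mul_sub] at subgradient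
  linarith

theorem iInf_add_inv_mul_integral_eq (hv : IsQuantile μ X β v) (hX : AEMeasurable X μ)
    (hX_pos : Integrable (fun ω => max (X ω) 0) μ) (hβ : β < 1) :
    (⨅ t : ℝ, (t + (1 - β)⁻¹ * ∫ ω, max (X ω - t) 0 ∂μ)) =
      v + (1 - β)⁻¹ * ∫ ω, max (X ω - v) 0 ∂μ :=
  IsLeast.csInf_eq
    ⟨mem_range_self v, forall_mem_range.2 (hv.add_inv_mul_integral_le hX hX_pos hβ)⟩

end IsQuantile

theorem cvar_eq_at_var_general [IsProbabilityMeasure μ] (hX : AEMeasurable X μ)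
    (hX_pos : Integrable (fun ω => max (X ω) 0) μ) (hβ : β ∈ Ioo (0 : ℝ) 1) :
    (⨅ t : ℝ, (t + (1 - β)⁻¹ * ∫ ω, max (X ω - t) 0 ∂μ)) =
      sInf {t : ℝ | β ≤ (μ {ω | X ω ≤ t}).toReal} +
        (1 - β)⁻¹ *
          ∫ ω, max (X ω - sInf {t : ℝ | β ≤ (μ {ω | X ω ≤ t}).toReal}) 0 ∂μ :=
  (isQuantile_csInf hX hβ).iInf_add_inv_mul_integral_eq hX hX_pos hβ.2

end Quantile

/-- The infimum defining `CVaR_β[X]` is attained at `t = VaR_β[X]`: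
`CVaR_β[X] = VaR_β[X] + (1-β)⁻¹ E[(X - VaR_β[X])₊]`. -/
theorem cvar_eq_at_var
    {Ω : Type*} [MeasurableSpace Ω] (μ : Measure Ω) [IsProbabilityMeasure μ]
    (X : Ω → ℝ) (hX : Integrable X μ) (β : ℝ) (hβ : β ∈ Set.Ioo (0 : ℝ) 1) :
    (⨅ t : ℝ, (t + (1 - β)⁻¹ * ∫ ω, max (X ω - t) 0 ∂μ)) =
      sInf {t : ℝ | β ≤ (μ {ω | X ω ≤ t}).toReal} +
        (1 - β)⁻¹ *
          ∫ ω, max (X ω - sInf {t : ℝ | β ≤ (μ {ω | X ω ≤ t}).toReal}) 0 ∂μ :=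
  cvar_eq_at_var_general hX.aemeasurable hX.pos_part hβ
end

section
/- Let X be an integrable real random variable and β ∈ (0,1). If ℙ[X ≤ VaR_β[X]] = β (in particular if the cumulative distribution function of X is continuous and takes the value β), then CVaR_β[X] = (1-β)⁻¹ · E[X · 1_{X > VaR_β[X]}], i.e. CVaR_β[X] is the average of the β-tail of the distribution of X. -/
open MeasureTheory

/-!
For every set `A` of mass `p` and every `t`, the average of `X` over `A` equals
`t + p⁻¹ E[(X - t) 1_A]`, which is at most `t + p⁻¹ E[(X - t)₊]`. If `A = {v < X}` and `t = v`,
this is an equality, because `(X - v) 1_{v < X} = (X - v)₊`. So when the tail `{v < X}` has mass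
`p = 1 - β`, its average is the minimum defining the conditional value-at-risk, attained at `v`.
-/

section

variable {Ω : Type*} [MeasurableSpace Ω] {μ : Measure Ω} {f X : Ω → ℝ} {s : Set Ω} {v : ℝ}

theorem setIntegral_le_integral_max_zero (hf : Integrable f μ) (s : Set Ω) :
    ∫ ω in s, f ω ∂μ ≤ ∫ ω, max (f ω) 0 ∂μ :=
  calc ∫ ω in s, f ω ∂μ
    _ ≤ ∫ ω in s, max (f ω) 0 ∂μ :=
      integral_mono hf.integrableOn hf.pos_part.integrableOn fun _ ↦ le_max_left _ _
    _ ≤ ∫ ω, max (f ω) 0 ∂μ :=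
      setIntegral_le_integral hf.pos_part (.of_forall fun _ ↦ le_max_right _ _)

theorem setIntegral_pos_eq_integral_max_zero (hf : AEMeasurable f μ) :
    ∫ ω in {ω | 0 < f ω}, f ω ∂μ = ∫ ω, max (f ω) 0 ∂μ := by
  rw [← integral_indicator₀ (nullMeasurableSet_lt aemeasurable_const hf)]
  congr with ω
  rcases lt_or_ge 0 (f ω) with pos | nonpos
  · simp [pos, pos.le]
  · simp [nonpos, nonpos.not_gt]

theorem setAverage_eq_add_inv_mul_setIntegral_sub (hf : IntegrableOn f s μ)
    (hs : μ.real s ≠ 0) (t : ℝ) :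
    ⨍ ω in s, f ω ∂μ = t + (μ.real s)⁻¹ * ∫ ω in s, (f ω - t) ∂μ := by
  have finite_mass : μ s ≠ ⊤ := fun h ↦ hs (by rw [measureReal_def, h, ENNReal.toReal_top])
  rw [integral_sub hf (integrableOn_const finite_mass), setIntegral_const, setAverage_eq,
    smul_eq_mul, smul_eq_mul, mul_sub, inv_mul_cancel_left₀ hs, add_sub_cancel]

/-- The Rockafellar–Uryasev objective, whose infimum over `t` is the conditional value-at-risk
of `X` at level `β`. It is parametrised by the tail mass `p = 1 - β`. -/
noncomputable def cvarObjective (μ : Measure Ω) (X : Ω → ℝ) (p t : ℝ) : ℝ :=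
  t + p⁻¹ * ∫ ω, max (X ω - t) 0 ∂μ

theorem setAverage_le_cvarObjective [IsFiniteMeasure μ] (hX : Integrable X μ)
    (hs : μ.real s ≠ 0) (t : ℝ) :
    ⨍ ω in s, X ω ∂μ ≤ cvarObjective μ X (μ.real s) t := by
  rw [setAverage_eq_add_inv_mul_setIntegral_sub hX.integrableOn hs t, cvarObjective]
  gcongr
  exact setIntegral_le_integral_max_zero (hX.sub (integrable_const t)) s

theorem cvarObjective_eq_setAverage_lt (hX : Integrable X μ) (hv : μ.real {ω | v < X ω} ≠ 0) :
    cvarObjective μ X (μ.real {ω | v < X ω}) v = ⨍ ω in {ω | v < X ω}, X ω ∂μ := by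
  have tail_excess : ∫ ω in {ω | v < X ω}, (X ω - v) ∂μ = ∫ ω, max (X ω - v) 0 ∂μ := by
    simpa only [sub_pos] using
      setIntegral_pos_eq_integral_max_zero (hX.aemeasurable.sub_const v)
  rw [setAverage_eq_add_inv_mul_setIntegral_sub hX.integrableOn hv v, tail_excess, cvarObjective]

theorem iInf_cvarObjective_eq_setAverage_lt [IsFiniteMeasure μ] (hX : Integrable X μ)
    (hv : μ.real {ω | v < X ω} ≠ 0) :
    ⨅ t, cvarObjective μ X (μ.real {ω | v < X ω}) t = ⨍ ω in {ω | v < X ω}, X ω ∂μ := by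
  refine IsLeast.csInf_eq ⟨⟨v, cvarObjective_eq_setAverage_lt hX hv⟩, ?_⟩
  rintro _ ⟨t, rfl⟩
  exact setAverage_le_cvarObjective hX hv t

theorem probReal_lt_eq_one_sub_probReal_le [IsProbabilityMeasure μ] (hX : AEMeasurable X μ)
    (v : ℝ) : μ.real {ω | v < X ω} = 1 - μ.real {ω | X ω ≤ v} := by
  rw [← probReal_compl_eq_one_sub₀ (nullMeasurableSet_le hX aemeasurable_const),
    Set.compl_ofPred]
  simp only [not_le]

theorem cvar_eq_tail_average_general [IsProbabilityMeasure μ] (hX : Integrable X μ) {β : ℝ}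
    (hβ : β < 1) (hv : μ.real {ω | X ω ≤ v} = β) :
    ⨅ t : ℝ, (t + (1 - β)⁻¹ * ∫ ω, max (X ω - t) 0 ∂μ) =
      (1 - β)⁻¹ * ∫ ω, Set.indicator {ω | v < X ω} X ω ∂μ := by
  have tail_mass : μ.real {ω | v < X ω} = 1 - β := by
    rw [probReal_lt_eq_one_sub_probReal_le hX.aemeasurable, hv]
  have tail_mass_ne_zero : μ.real {ω | v < X ω} ≠ 0 := tail_mass ▸ (sub_pos.2 hβ).ne'
  have tail_nullMeasurable : NullMeasurableSet {ω | v < X ω} μ :=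
    nullMeasurableSet_lt aemeasurable_const hX.aemeasurable
  calc ⨅ t : ℝ, (t + (1 - β)⁻¹ * ∫ ω, max (X ω - t) 0 ∂μ)
    _ = ⨅ t, cvarObjective μ X (μ.real {ω | v < X ω}) t := by simp only [cvarObjective, tail_mass]
    _ = ⨍ ω in {ω | v < X ω}, X ω ∂μ := iInf_cvarObjective_eq_setAverage_lt hX tail_mass_ne_zero
    _ = (1 - β)⁻¹ * ∫ ω, Set.indicator {ω | v < X ω} X ω ∂μ := by
      rw [setAverage_eq, tail_mass, smul_eq_mul, integral_indicator₀ tail_nullMeasurable]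

end

/-- If `ℙ[X ≤ VaR_β[X]] = β`, then `CVaR_β[X]` is the average of the `β`-tail of the
distribution of `X`: `CVaR_β[X] = (1-β)⁻¹ E[X · 1_{X > VaR_β[X]}]`. -/
theorem cvar_eq_tail_average
    {Ω : Type*} [MeasurableSpace Ω] (μ : Measure Ω) [IsProbabilityMeasure μ]
    (X : Ω → ℝ) (hX : Integrable X μ) (β : ℝ) (hβ : β ∈ Set.Ioo (0 : ℝ) 1)
    (hcdf : (μ {ω | X ω ≤ sInf {t : ℝ | β ≤ (μ {ω | X ω ≤ t}).toReal}}).toReal = β) :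
    (⨅ t : ℝ, (t + (1 - β)⁻¹ * ∫ ω, max (X ω - t) 0 ∂μ)) =
      (1 - β)⁻¹ *
        ∫ ω, Set.indicator
          {ω | sInf {t : ℝ | β ≤ (μ {ω | X ω ≤ t}).toReal} < X ω} X ω ∂μ := by
  exact cvar_eq_tail_average_general hX hβ.2 hcdf
end

section
/- Let X be an integrable real random variable and t ∈ ℝ a point with ℙ[X = t] = 0. Then the function h(s) := E[(X - s)₊] is differentiable at s = t with h'(t) = -ℙ[X > t]; consequently, for β ∈ (0,1), the Rockafellar–Uryasev function g(s) := s + (1-β)⁻¹ E[(X - s)₊] is differentiable at t with g'(t) = 1 - (1-β)⁻¹ ℙ[X ≥ t]. -/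
open MeasureTheory

/-!
For `x ≠ t` the map `s ↦ (x - s)₊` is differentiable at `t`, with derivative `-1` if `t < x` and
`0` otherwise. On `(q, ∞)` it is `1`-Lipschitz, and identically zero unless `q < x`. So for any
`q < t` the difference quotients of `s ↦ (X - s)₊` at `t` are eventually dominated by the
indicator of `{q < X}`. By Markov's inequality this is integrable as soon as `(X - r)₊` is, for
some `r < q`, and dominated convergence differentiates under the integral.
-/

open Set

section PositivePart

variable {x r q t : ℝ}

theorem lipschitzWith_max_sub_zero (x : ℝ) : LipschitzWith 1 fun s : ℝ => max (x - s) 0 := by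
  simpa only [zero_add, id] using! ((LipschitzWith.const x).sub LipschitzWith.id).max_const 0

theorem lipschitzOnWith_Ioi_max_sub_zero (q x : ℝ) :
    LipschitzOnWith (Real.nnabs ((Ioi q).indicator 1 x)) (fun s => max (x - s) 0) (Ioi q) := by
  by_cases hx : x ∈ Ioi q
  · simpa [hx] using (lipschitzWith_max_sub_zero x).lipschitzOnWith
  · have h_zero : EqOn (fun s => max (x - s) 0) (fun _ => 0) (Ioi q) := fun s hs =>
      max_eq_right (sub_nonpos.2 ((not_lt.1 hx).trans hs.le))
    intro s hs s' hs'
    simp only [h_zero hs, h_zero hs', edist_self, zero_le]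

theorem hasDerivAt_max_sub_zero_of_ne (hx : x ≠ t) :
    HasDerivAt (fun s => max (x - s) 0) ((Ioi t).indicator (-1) x) t := by
  rcases hx.lt_or_gt with hxt | htx
  · rw [indicator_of_notMem (notMem_Ioi.2 hxt.le)]
    refine (hasDerivAt_const t (0 : ℝ)).congr_of_eventuallyEq ?_
    filter_upwards [lt_mem_nhds hxt] with s hs
    exact max_eq_right (sub_nonpos.2 hs.le)
  · rw [indicator_of_mem (mem_Ioi.2 htx)]
    refine ((hasDerivAt_id t).const_sub x).congr_of_eventuallyEq ?_
    filter_upwards [gt_mem_nhds htx] with s hs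
    exact max_eq_left (sub_nonneg.2 hs.le)

theorem preimage_Ioi_eq_setOf_sub_lt_max_sub_zero {Ω : Type*} (X : Ω → ℝ) (hrq : r ≤ q) :
    X ⁻¹' Ioi q = {ω | q - r < max (X ω - r) 0} := by
  grind

end PositivePart

section Integral

variable {Ω : Type*} [MeasurableSpace Ω] {μ : Measure Ω} {X : Ω → ℝ} {r q t : ℝ}

theorem integrable_max_sub_zero_of_le (hrq : r ≤ q)
    (hX : Integrable (fun ω => max (X ω - r) 0) μ) :
    Integrable (fun ω => max (X ω - q) 0) μ := by
  -- `X` may fail to be a.e. measurable, so measurability is transported from `(X - r)₊`.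
  have h_shift : (fun ω => max (X ω - q) 0) =
      fun ω => max (max (X ω - r) 0 - (q - r)) 0 := by
    grind
  have h_meas : AEStronglyMeasurable (fun ω => max (X ω - q) 0) μ := by
    rw [h_shift]
    exact (hX.aestronglyMeasurable.sub aestronglyMeasurable_const).sup aestronglyMeasurable_const
  refine hX.mono' h_meas (.of_forall fun ω => ?_)
  rw [Real.norm_of_nonneg (le_max_right _ _)]
  gcongr

theorem nullMeasurableSet_preimage_Ioi_of_integrable_max_sub_zero (hrq : r ≤ q)
    (hX : Integrable (fun ω => max (X ω - r) 0) μ) : NullMeasurableSet (X ⁻¹' Ioi q) μ := by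
  rw [preimage_Ioi_eq_setOf_sub_lt_max_sub_zero X hrq]
  exact nullMeasurableSet_lt aemeasurable_const hX.aemeasurable

theorem measure_preimage_Ioi_lt_top_of_integrable_max_sub_zero (hrq : r < q)
    (hX : Integrable (fun ω => max (X ω - r) 0) μ) : μ (X ⁻¹' Ioi q) < ⊤ := by
  rw [preimage_Ioi_eq_setOf_sub_lt_max_sub_zero X hrq.le]
  exact hX.measure_gt_lt_top (sub_pos.2 hrq)

theorem hasDerivAt_integral_max_sub_zero (hrt : r < t)
    (hX : Integrable (fun ω => max (X ω - r) 0) μ) (ht : ∀ᵐ ω ∂μ, X ω ≠ t) :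
    HasDerivAt (fun s => ∫ ω, max (X ω - s) 0 ∂μ) (-μ.real {ω | t < X ω}) t := by
  obtain ⟨q, hrq, hqt⟩ := exists_between hrt
  have h_null : ∀ {a}, r ≤ a → NullMeasurableSet (X ⁻¹' Ioi a) μ := fun ha =>
    nullMeasurableSet_preimage_Ioi_of_integrable_max_sub_zero ha hX
  have h_bound : Integrable ((X ⁻¹' Ioi q).indicator (1 : Ω → ℝ)) μ :=
    IntegrableOn.integrable_indicator₀ (integrableOn_const
      (measure_preimage_Ioi_lt_top_of_integrable_max_sub_zero hrq hX).ne) (h_null hrq.le)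
  have h_integral : ∫ ω, (X ⁻¹' Ioi t).indicator (-1 : Ω → ℝ) ω ∂μ = -μ.real {ω | t < X ω} := by
    rw [integral_indicator₀ (h_null hrt.le)]
    simp [preimage, measureReal_def]
  rw [← h_integral]
  refine (hasDerivAt_integral_of_dominated_loc_of_lip
    (F := fun s ω => max (X ω - s) 0) (Ioi_mem_nhds hqt) ?_
    (integrable_max_sub_zero_of_le hrt.le hX)
    (aestronglyMeasurable_one.neg.indicator₀ (h_null hrt.le)) ?_ h_bound ?_).2
  · filter_upwards [lt_mem_nhds hrt] with s hs
    exact (integrable_max_sub_zero_of_le hs.le hX).aestronglyMeasurable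
  · exact .of_forall fun ω => lipschitzOnWith_Ioi_max_sub_zero q (X ω)
  · filter_upwards [ht] with ω hω using hasDerivAt_max_sub_zero_of_ne hω

theorem setOf_le_ae_eq_setOf_lt {α : Type*} [PartialOrder α] {Y : Ω → α} {a : α}
    (ha : ∀ᵐ ω ∂μ, Y ω ≠ a) : {ω | a ≤ Y ω} =ᵐ[μ] {ω | a < Y ω} := by
  filter_upwards [ha] with ω hω
  exact propext hω.symm.le_iff_lt

theorem rockafellar_uryasev_deriv_general (hrt : r < t)
    (hX : Integrable (fun ω => max (X ω - r) 0) μ) (ht : μ {ω | X ω = t} = 0) (c : ℝ) :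
    HasDerivAt (fun s => ∫ ω, max (X ω - s) 0 ∂μ) (-μ.real {ω | t < X ω}) t ∧
      HasDerivAt (fun s => s + c * ∫ ω, max (X ω - s) 0 ∂μ) (1 - c * μ.real {ω | t ≤ X ω}) t := by
  have h_ne : ∀ᵐ ω ∂μ, X ω ≠ t := measure_eq_zero_iff_ae_notMem.1 ht
  have h_deriv := hasDerivAt_integral_max_sub_zero hrt hX h_ne
  refine ⟨h_deriv, ?_⟩
  rw [measureReal_congr (setOf_le_ae_eq_setOf_lt h_ne), sub_eq_add_neg, ← mul_neg]
  exact (hasDerivAt_id' t).fun_add (h_deriv.const_mul c)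

end Integral

/-- If `ℙ[X = t] = 0`, then `h(s) = E[(X - s)₊]` is differentiable at `t` with
`h'(t) = -ℙ[X > t]`, and consequently the Rockafellar–Uryasev function
`g(s) = s + (1-β)⁻¹ E[(X - s)₊]` is differentiable at `t` with
`g'(t) = 1 - (1-β)⁻¹ ℙ[X ≥ t]`. -/
theorem rockafellar_uryasev_deriv
    {Ω : Type*} [MeasurableSpace Ω] (μ : Measure Ω) [IsProbabilityMeasure μ]
    (X : Ω → ℝ) (hX : Integrable X μ) (t : ℝ) (ht : μ {ω | X ω = t} = 0)
    (β : ℝ) (hβ : β ∈ Set.Ioo (0 : ℝ) 1) :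
    HasDerivAt (fun s : ℝ => ∫ ω, max (X ω - s) 0 ∂μ)
        (-(μ {ω | t < X ω}).toReal) t ∧
      HasDerivAt (fun s : ℝ => s + (1 - β)⁻¹ * ∫ ω, max (X ω - s) 0 ∂μ)
        (1 - (1 - β)⁻¹ * (μ {ω | t ≤ X ω}).toReal) t := by
  exact rockafellar_uryasev_deriv_general (sub_one_lt t)
    (hX.sub (integrable_const (t - 1))).pos_part ht (1 - β)⁻¹
end

section
/- A point t ∈ ℝ minimizes the Rockafellar–Uryasev function g(s) := s + (1-β)⁻¹ E[(X - s)₊] over s ∈ ℝ if and only if ℙ[X < t] ≤ β ≤ ℙ[X ≤ t]; i.e. the set of minimizers is exactly the set of β-quantiles of X. -/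
open MeasureTheory

/-!
Write `φ s = ∫ (X - s)₊`. For `a < b`, passing from `(X - a)₊` to `(X - b)₊` loses exactly `b - a`
where `b ≤ X`, at most `b - a` where `a < X`, and nothing where `X ≤ a`, so
`(b - a) μ{b ≤ X} ≤ φ a - φ b ≤ (b - a) μ{a < X}`.
Letting `b ↓ t` with `a = t`, and `a ↑ t` with `b = t`, shows that the one-sided slopes of `φ` at
`t` are `-μ{t < X}` on the right and `-μ{t ≤ X}` on the left. Hence `t` minimizes `s + c⁻¹ φ s` if
and only if `μ{t < X} ≤ c ≤ μ{t ≤ X}`; for a probability measure and `c = 1 - β` this is the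
quantile condition.
-/

open Filter Set Topology

section Tails

variable {Ω α : Type*} [MeasurableSpace Ω] {μ : Measure Ω} [LinearOrder α] [TopologicalSpace α]
  {X : Ω → α} {t : α}

theorem tendsto_measure_biUnion_gt [OrderTopology α] [FirstCountableTopology α] {S : α → Set Ω}
    (hS : ∀ r s, t < r → r ≤ s → S s ⊆ S r) :
    Tendsto (μ ∘ S) (𝓝[>] t) (𝓝 (μ (⋃ s > t, S s))) := by
  by_cases ht : Order.IsPredPrelimit t
  · have : (atBot : Filter (Ioi t)).IsCountablyGenerated := by
      rw [← comap_coe_Ioi_nhdsGT t ht]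
      infer_instance
    simp_rw [← map_coe_Ioi_atBot t ht, tendsto_map'_iff, ← mem_Ioi, biUnion_eq_iUnion]
    exact tendsto_measure_iUnion_atBot fun r s hrs => hS r s r.2 hrs
  · obtain ⟨_, hcov⟩ := Order.not_isPredPrelimit_iff.1 ht
    simp [hcov.nhdsGT]

theorem tendsto_measureReal_le_nhdsGT [OrderTopology α] [FirstCountableTopology α]
    (hfin : μ {ω | t < X ω} ≠ ⊤) :
    Tendsto (fun s => μ.real {ω | s ≤ X ω}) (𝓝[>] t) (𝓝 (μ.real {ω | t < X ω})) := by
  have hUnion : {ω | t < X ω} = ⋃ s > t, {ω | s ≤ X ω} := by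
    ext ω
    simp only [mem_ofPred_eq, mem_iUnion, exists_prop]
    exact ⟨fun h => ⟨X ω, h, le_rfl⟩, fun ⟨_, hts, hs⟩ => hts.trans_le hs⟩
  refine (ENNReal.tendsto_toReal hfin).comp ?_
  rw [hUnion]
  exact tendsto_measure_biUnion_gt fun _ _ _ hrs _ => hrs.trans

theorem tendsto_measureReal_lt_nhdsLT [OrderTopology α] [FirstCountableTopology α]
    (hmeas : ∀ s < t, NullMeasurableSet {ω | s < X ω} μ)
    (hfin : ∃ s < t, μ {ω | s < X ω} ≠ ⊤) :
    Tendsto (fun s => μ.real {ω | s < X ω}) (𝓝[<] t) (𝓝 (μ.real {ω | t ≤ X ω})) := by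
  have hInter : {ω | t ≤ X ω} = ⋂ s < t, {ω | s < X ω} := by
    ext ω
    simp only [mem_ofPred_eq, mem_iInter]
    exact forall_lt_iff_le.symm
  have hfin' : μ {ω | t ≤ X ω} ≠ ⊤ := by
    obtain ⟨s, hst, hs⟩ := hfin
    exact measure_ne_top_of_subset (fun _ => hst.trans_le) hs
  refine (ENNReal.tendsto_toReal hfin').comp ?_
  rw [hInter]
  exact tendsto_measure_biInter_gt (ι := αᵒᵈ) hmeas
    (fun _ _ _ hrs _ => LE.le.trans_lt (α := α) hrs) hfin

theorem probReal_quantile_iff_tails [OrderClosedTopology α] [MeasurableSpace α]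
    [OpensMeasurableSpace α] [IsProbabilityMeasure μ] (hX : AEMeasurable X μ) {β : ℝ} :
    (μ.real {ω | X ω < t} ≤ β ∧ β ≤ μ.real {ω | X ω ≤ t}) ↔
      μ.real {ω | t < X ω} ≤ 1 - β ∧ 1 - β ≤ μ.real {ω | t ≤ X ω} := by
  have h_lt : μ.real {ω | t < X ω} = 1 - μ.real {ω | X ω ≤ t} := by
    simpa only [← preimage_compl, compl_Iic] using!
      probReal_compl_eq_one_sub₀ (hX.nullMeasurableSet_preimage (measurableSet_Iic (a := t)))
  have h_le : μ.real {ω | t ≤ X ω} = 1 - μ.real {ω | X ω < t} := by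
    simpa only [← preimage_compl, compl_Iio] using!
      probReal_compl_eq_one_sub₀ (hX.nullMeasurableSet_preimage (measurableSet_Iio (a := t)))
  rw [h_lt, h_le, sub_le_sub_iff_left, sub_le_sub_iff_left, and_comm]

end Tails

section Excess

variable {Ω : Type*} [MeasurableSpace Ω] {μ : Measure Ω} {X : Ω → ℝ} {a b c t : ℝ}

theorem nullMeasurableSet_lt_of_integrable_excess
    (ha : Integrable (fun ω => max (X ω - a) 0) μ) : NullMeasurableSet {ω | a < X ω} μ := by
  simpa using nullMeasurableSet_lt (aemeasurable_const (b := (0 : ℝ))) ha.aemeasurable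

theorem sub_le_max_sub_zero_iff (hab : a < b) (x : ℝ) : b - a ≤ max (x - a) 0 ↔ b ≤ x := by
  simp [hab]

theorem nullMeasurableSet_le_of_integrable_excess
    (ha : Integrable (fun ω => max (X ω - a) 0) μ) (hab : a < b) :
    NullMeasurableSet {ω | b ≤ X ω} μ := by
  simpa only [sub_le_max_sub_zero_iff hab] using
    nullMeasurableSet_le (aemeasurable_const (b := b - a)) ha.aemeasurable

theorem measure_le_lt_top_of_integrable_excess
    (ha : Integrable (fun ω => max (X ω - a) 0) μ) (hab : a < b) :
    μ {ω | b ≤ X ω} < ⊤ := by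
  simpa only [sub_le_max_sub_zero_iff hab] using ha.measure_ge_lt_top (sub_pos.2 hab)

theorem measure_lt_lt_top_of_integrable_excess
    (ha : Integrable (fun ω => max (X ω - a) 0) μ) (hab : a < b) :
    μ {ω | b < X ω} < ⊤ :=
  measure_lt_top_of_subset (fun _ (h : b < X _) => h.le)
    (measure_le_lt_top_of_integrable_excess ha hab).ne

theorem mul_measureReal_le_integral_excess_sub
    (ha : Integrable (fun ω => max (X ω - a) 0) μ)
    (hb : Integrable (fun ω => max (X ω - b) 0) μ) (hab : a < b) :
    (b - a) * μ.real {ω | b ≤ X ω} ≤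
      (∫ ω, max (X ω - a) 0 ∂μ) - ∫ ω, max (X ω - b) 0 ∂μ := by
  have hmeas := nullMeasurableSet_le_of_integrable_excess ha hab
  have hfin := measure_le_lt_top_of_integrable_excess ha hab
  calc (b - a) * μ.real {ω | b ≤ X ω}
      = ∫ ω, {ω | b ≤ X ω}.indicator (fun _ => b - a) ω ∂μ := by
        rw [integral_indicator₀ hmeas, setIntegral_const, smul_eq_mul, mul_comm]
    _ ≤ ∫ ω, (max (X ω - a) 0 - max (X ω - b) 0) ∂μ := by
        refine integral_mono (IntegrableOn.integrable_indicator₀ (integrableOn_const hfin.ne) hmeas)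
          (ha.sub hb) fun ω => ?_
        simp only [indicator, mem_ofPred_eq]
        grind
    _ = (∫ ω, max (X ω - a) 0 ∂μ) - ∫ ω, max (X ω - b) 0 ∂μ := integral_sub ha hb

theorem integral_excess_sub_le_mul_measureReal
    (ha : Integrable (fun ω => max (X ω - a) 0) μ)
    (hb : Integrable (fun ω => max (X ω - b) 0) μ) (hab : a < b)
    (hfin : μ {ω | a < X ω} ≠ ⊤) :
    (∫ ω, max (X ω - a) 0 ∂μ) - ∫ ω, max (X ω - b) 0 ∂μ ≤
      (b - a) * μ.real {ω | a < X ω} := by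
  have hmeas := nullMeasurableSet_lt_of_integrable_excess ha
  calc (∫ ω, max (X ω - a) 0 ∂μ) - ∫ ω, max (X ω - b) 0 ∂μ
      = ∫ ω, (max (X ω - a) 0 - max (X ω - b) 0) ∂μ := (integral_sub ha hb).symm
    _ ≤ ∫ ω, {ω | a < X ω}.indicator (fun _ => b - a) ω ∂μ := by
        refine integral_mono (ha.sub hb)
          (IntegrableOn.integrable_indicator₀ (integrableOn_const hfin) hmeas) fun ω => ?_
        simp only [indicator, mem_ofPred_eq]
        grind
    _ = (b - a) * μ.real {ω | a < X ω} := by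
        rw [integral_indicator₀ hmeas, setIntegral_const, smul_eq_mul, mul_comm]

theorem forall_gt_integral_excess_sub_le_iff
    (hX : ∀ s, Integrable (fun ω => max (X ω - s) 0) μ) :
    (∀ s > t, (∫ ω, max (X ω - t) 0 ∂μ) - ∫ ω, max (X ω - s) 0 ∂μ ≤ (s - t) * c) ↔
      μ.real {ω | t < X ω} ≤ c := by
  have hfin := (measure_lt_lt_top_of_integrable_excess (hX (t - 1)) (sub_one_lt t)).ne
  refine ⟨fun h => ?_, fun h s hs => ?_⟩
  · refine le_of_tendsto (tendsto_measureReal_le_nhdsGT hfin) ?_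
    filter_upwards [self_mem_nhdsWithin] with s hs
    exact le_of_mul_le_mul_left
      ((mul_measureReal_le_integral_excess_sub (hX t) (hX s) hs).trans (h s hs)) (sub_pos.2 hs)
  · exact (integral_excess_sub_le_mul_measureReal (hX t) (hX s) hs hfin).trans
      (mul_le_mul_of_nonneg_left h (sub_pos.2 hs).le)

theorem forall_lt_le_integral_excess_sub_iff
    (hX : ∀ s, Integrable (fun ω => max (X ω - s) 0) μ) :
    (∀ s < t, (t - s) * c ≤ (∫ ω, max (X ω - s) 0 ∂μ) - ∫ ω, max (X ω - t) 0 ∂μ) ↔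
      c ≤ μ.real {ω | t ≤ X ω} := by
  have hfin (s : ℝ) : μ {ω | s < X ω} ≠ ⊤ :=
    (measure_lt_lt_top_of_integrable_excess (hX (s - 1)) (sub_one_lt s)).ne
  refine ⟨fun h => ?_, fun h s hs => ?_⟩
  · refine ge_of_tendsto (tendsto_measureReal_lt_nhdsLT
      (fun s _ => nullMeasurableSet_lt_of_integrable_excess (hX s))
      ⟨t - 1, sub_one_lt t, hfin _⟩) ?_
    filter_upwards [self_mem_nhdsWithin] with s hs
    exact le_of_mul_le_mul_left
      ((h s hs).trans (integral_excess_sub_le_mul_measureReal (hX s) (hX t) hs (hfin s)))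
      (sub_pos.2 hs)
  · exact (mul_le_mul_of_nonneg_left h (sub_pos.2 hs).le).trans
      (mul_measureReal_le_integral_excess_sub (hX s) (hX t) hs)

theorem rockafellar_uryasev_minimizers_general
    (hX : ∀ s, Integrable (fun ω => max (X ω - s) 0) μ) (hc : 0 < c) :
    (∀ s : ℝ, (t + c⁻¹ * ∫ ω, max (X ω - t) 0 ∂μ) ≤ s + c⁻¹ * ∫ ω, max (X ω - s) 0 ∂μ) ↔
      μ.real {ω | t < X ω} ≤ c ∧ c ≤ μ.real {ω | t ≤ X ω} := by
  have le_iff (s p q : ℝ) : t + c⁻¹ * p ≤ s + c⁻¹ * q ↔ (t - s) * c ≤ q - p := by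
    rw [← le_div_iff₀ hc, div_eq_inv_mul, mul_sub]
    constructor <;> intro h <;> linarith
  rw [← forall_gt_integral_excess_sub_le_iff hX, ← forall_lt_le_integral_excess_sub_iff hX]
  simp only [le_iff]
  refine ⟨fun h => ⟨fun s _ => by linarith [h s], fun s _ => h s⟩, fun ⟨h_gt, h_lt⟩ s => ?_⟩
  rcases lt_trichotomy s t with hs | rfl | hs
  · exact h_lt s hs
  · simp
  · linarith [h_gt s hs]

end Excess

/-- `t` minimizes the Rockafellar–Uryasev function `g(s) = s + (1-β)⁻¹ E[(X - s)₊]`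
over `s ∈ ℝ` if and only if `t` is a `β`-quantile of `X`, i.e.
`ℙ[X < t] ≤ β ≤ ℙ[X ≤ t]`. -/
theorem rockafellar_uryasev_minimizers
    {Ω : Type*} [MeasurableSpace Ω] (μ : Measure Ω) [IsProbabilityMeasure μ]
    (X : Ω → ℝ) (hX : Integrable X μ) (β : ℝ) (hβ : β ∈ Set.Ioo (0 : ℝ) 1) (t : ℝ) :
    (∀ s : ℝ, (t + (1 - β)⁻¹ * ∫ ω, max (X ω - t) 0 ∂μ) ≤
        s + (1 - β)⁻¹ * ∫ ω, max (X ω - s) 0 ∂μ) ↔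
      (μ {ω | X ω < t}).toReal ≤ β ∧ β ≤ (μ {ω | X ω ≤ t}).toReal :=
  (rockafellar_uryasev_minimizers_general (fun s => (hX.sub (integrable_const s)).pos_part)
    (sub_pos.2 hβ.2)).trans (probReal_quantile_iff_tails hX.aemeasurable).symm
end
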